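/- Let Φ and Ψ be graphs satisfying the compatibility conditions for amalgamation, with the amalgamation Φ+Ψ having a single component, and let 𝒟 be the free category of the equational class 𝒦_{Φ,Ψ} generated by the arrow f : A → C. Then Φ+Ψ provides g-dinaturality if and only if the equation R⟨1_C, f⟩ ∘ β(C,…,C) ∘ α(C,…,C) ∘ T⟨f, 1_C⟩ = R⟨f, 1_A⟩ ∘ β(A,…,A) ∘ α(A,…,A) ∘ T⟨1_A, f⟩ holds in 𝒟, where ⟨u, v⟩ denotes the argument tuple with u in all positive and v in all negative argument places. -/

import Mathlib

open CategoryTheory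

universe u v

namespace GDin

/-! ### Graphs in the sense of the paper -/

/-- Vertices of a graph with `m` left-hand argument places, `n` right-hand argument
places and `g` auxiliary `G`-vertices. -/
abbrev Vtx (m n g : ℕ) := (Fin m ⊕ Fin n) ⊕ Fin g

/-- The "same component" relation generated by a set of edges. -/
def Conn {V : Type*} (E : V → V → Prop) : V → V → Prop := Relation.EqvGen E

/-- A graph in the sense of the paper.  The sign (variance) functions `sL` (for the
left-hand argument places `x₁,…,x_m`) and `sR` (for the right-hand argument places
`y₁,…,y_n`) are parameters; `true` means positive (covariant), `false` negative.
The structure also carries the number `k` of connected components together with the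
component classifier `π`. -/
structure GGraph (m n g : ℕ) (sL : Fin m → Bool) (sR : Fin n → Bool) : Type where
  edge : Vtx m n g → Vtx m n g → Prop
  symm : ∀ u v, edge u v → edge v u
  /-- condition 1: every vertex belongs to some edge -/
  covered : ∀ v, ∃ w, edge v w
  /-- condition 2: an edge joins two left-hand argument places iff they have opposite
  signs and lie in the same component -/
  condX : ∀ i j : Fin m, edge (.inl (.inl i)) (.inl (.inl j)) ↔
    (sL i = !sL j ∧ Conn edge (.inl (.inl i)) (.inl (.inl j)))
  /-- condition 3 -/
  condY : ∀ i j : Fin n, edge (.inl (.inr i)) (.inl (.inr j)) ↔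
    (sR i = !sR j ∧ Conn edge (.inl (.inr i)) (.inl (.inr j)))
  /-- condition 4 -/
  condXY : ∀ (i : Fin m) (j : Fin n), edge (.inl (.inl i)) (.inl (.inr j)) ↔
    (sL i = sR j ∧ Conn edge (.inl (.inl i)) (.inl (.inr j)))
  /-- condition 5, first half: if a component contains an edge between two argument
  places then it contains no `G`-vertex -/
  condG₁ : ∀ v : Vtx m n g,
    (∃ u w : Fin m ⊕ Fin n, Conn edge (.inl u) v ∧ edge (.inl u) (.inl w)) →
      ∀ a : Fin g, ¬ Conn edge (.inr a) v
  /-- condition 5, second half: otherwise the component contains exactly one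
  `G`-vertex -/
  condG₂ : ∀ v : Vtx m n g,
    (¬ ∃ u w : Fin m ⊕ Fin n, Conn edge (.inl u) v ∧ edge (.inl u) (.inl w)) →
      ∃! a : Fin g, Conn edge (.inr a) v
  /-- condition 5: every other vertex of such a component is joined to the
  `G`-vertex by an edge -/
  condG₃ : ∀ (a : Fin g) (u : Fin m ⊕ Fin n),
    Conn edge (.inl u) (.inr a) → edge (.inl u) (.inr a)
  /-- the number of components -/
  k : ℕ
  /-- the component classifier -/
  π : Vtx m n g → Fin k
  π_surj : Function.Surjective π
  π_eq : ∀ u v, π u = π v ↔ Conn edge u v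

namespace GGraph

variable {m n g : ℕ} {sL : Fin m → Bool} {sR : Fin n → Bool}

/-- component of the `i`-th left-hand argument place -/
def πL (Γ : GGraph m n g sL sR) (i : Fin m) : Fin Γ.k := Γ.π (.inl (.inl i))

/-- component of the `j`-th right-hand argument place -/
def πR (Γ : GGraph m n g sL sR) (j : Fin n) : Fin Γ.k := Γ.π (.inl (.inr j))

end GGraph

/-! ### Variance-indexed categories and g-dinaturality -/

/-- `B` or `Bᵒᵖ` according to a variance. -/
def VarCat (B : Type u) [Category.{v} B] : Bool → Type u
  | true => B
  | false => Bᵒᵖ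

instance (B : Type u) [Category.{v} B] : ∀ b, Category.{v} (VarCat B b)
  | true => (inferInstance : Category B)
  | false => (inferInstance : Category Bᵒᵖ)

variable {B : Type u} [Category.{v} B]

/-- The object of `B` or `Bᵒᵖ` with `P` at a positive argument place and `N` at a
negative one. -/
def pairObj : (b : Bool) → B → B → VarCat B b
  | true, P, _ => P
  | false, _, N => Opposite.op N

/-- The morphism with `u` at a positive argument place and `v` (contravariantly) at a
negative one. -/
def pairHom : (b : Bool) → {P P' N N' : B} → (P ⟶ P') → (N' ⟶ N) →
    (pairObj b P N ⟶ pairObj b P' N')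
  | true, _, _, _, _, u, _ => u
  | false, _, _, _, _, _, v => v.op

variable {ι : Type} {k : ℕ}

/-- The tuple of objects `⟨u,v⟩` with `u` in all positive and `v` in all negative
argument places. -/
@[reducible] def tupObj (s : ι → Bool) (P N : B) : ∀ i, VarCat B (s i) :=
  fun i => pairObj (s i) P N

/-- The corresponding tuple of morphisms. -/
def tupHom (s : ι → Bool) {P P' N N' : B} (u : P ⟶ P') (v : N' ⟶ N) :
    (tupObj s P N ⟶ tupObj s P' N') :=
  fun i => pairHom (s i) u v

/-- The diagonal-like tuple of objects determined by an assignment of objects to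
the components of a graph. -/
@[reducible] def diagObj (s : ι → Bool) (pl : ι → Fin k) (A : Fin k → B) :
    ∀ i, VarCat B (s i) :=
  fun i => pairObj (s i) (A (pl i)) (A (pl i))

/-- The tuple of objects obtained from the component assignment `A` by replacing the
value of component `c` by `P` at positive and `N` at negative argument places. -/
def hexObj (s : ι → Bool) (pl : ι → Fin k) (c : Fin k) (A : Fin k → B) (P N : B) :
    ∀ i, VarCat B (s i) :=
  fun i => if pl i = c then pairObj (s i) P N else pairObj (s i) (A (pl i)) (A (pl i))

/-- The corresponding tuple of morphisms (identities outside component `c`). -/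
def hexHom (s : ι → Bool) (pl : ι → Fin k) (c : Fin k) (A : Fin k → B)
    {P P' N N' : B} (u : P ⟶ P') (v : N' ⟶ N) :
    (hexObj s pl c A P N ⟶ hexObj s pl c A P' N') :=
  fun i => by
    unfold hexObj
    by_cases h : pl i = c
    · simp only [if_pos h]; exact pairHom (s i) u v
    · simp only [if_neg h]; exact 𝟙 _

/-- update of a component assignment -/
def updF {γ : Type*} (A : Fin k → γ) (c : Fin k) (X : γ) : Fin k → γ :=
  fun j => if j = c then X else A j

theorem diag_upd (s : ι → Bool) (pl : ι → Fin k) (c : Fin k) (A : Fin k → B) (X : B) :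
    diagObj s pl (updF A c X) = hexObj s pl c A X X := by
  funext i
  unfold diagObj hexObj updF
  by_cases h : pl i = c <;> simp [h]

/-- g-dinaturality of a transformation with respect to a graph: in every component
and for every morphism `f : P ⟶ Q` (all other components being kept fixed), the
g-dinaturality hexagon commutes. -/
def IsGDin {m n gΓ : ℕ} {sL : Fin m → Bool} {sR : Fin n → Bool}
    (Γ : GGraph m n gΓ sL sR)
    (T : (∀ i : Fin m, VarCat B (sL i)) ⥤ B)
    (S : (∀ j : Fin n, VarCat B (sR j)) ⥤ B)
    (α : ∀ A : Fin Γ.k → B, T.obj (diagObj sL Γ.πL A) ⟶ S.obj (diagObj sR Γ.πR A)) :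
    Prop :=
  ∀ (c : Fin Γ.k) (A : Fin Γ.k → B) (P Q : B) (f : P ⟶ Q),
    T.map (hexHom sL Γ.πL c A f (𝟙 Q)) ≫
      eqToHom (congrArg T.obj (diag_upd sL Γ.πL c A Q).symm) ≫
      α (updF A c Q) ≫
      eqToHom (congrArg S.obj (diag_upd sR Γ.πR c A Q)) ≫
      S.map (hexHom sR Γ.πR c A (𝟙 Q) f)
    = T.map (hexHom sL Γ.πL c A (𝟙 P) f) ≫
      eqToHom (congrArg T.obj (diag_upd sL Γ.πL c A P).symm) ≫
      α (updF A c P) ≫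
      eqToHom (congrArg S.obj (diag_upd sR Γ.πR c A P)) ≫
      S.map (hexHom sR Γ.πR c A f (𝟙 P))

/-- The g-dinaturality hexagon for a transformation whose graph has a single
component (so that only the signs of the argument places matter). -/
def SingleHex {ιx ιz : Type} (sx : ιx → Bool) (sz : ιz → Bool)
    (F : (∀ i : ιx, VarCat B (sx i)) ⥤ B) (H : (∀ l : ιz, VarCat B (sz l)) ⥤ B)
    (φ : ∀ A : B, F.obj (tupObj sx A A) ⟶ H.obj (tupObj sz A A)) : Prop :=
  ∀ (P Q : B) (f : P ⟶ Q),
    F.map (tupHom sx f (𝟙 Q)) ≫ φ Q ≫ H.map (tupHom sz (𝟙 Q) f)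
    = F.map (tupHom sx (𝟙 P) f) ≫ φ P ≫ H.map (tupHom sz f (𝟙 P))

section Amalg

variable {m n p gΦ gΨ : ℕ} {sx : Fin m → Bool} {sy : Fin n → Bool} {sz : Fin p → Bool}

/-- Vertices of the amalgamation `Φ+Ψ` of two graphs sharing their `y` argument
places. -/
abbrev AVtx (m n p gΦ gΨ : ℕ) := (Fin m ⊕ Fin n ⊕ Fin p) ⊕ (Fin gΦ ⊕ Fin gΨ)

/-- inclusion of the vertices of `Φ` into the amalgamation -/
def phiInc : Vtx m n gΦ → AVtx m n p gΦ gΨ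
  | .inl (.inl i) => .inl (.inl i)
  | .inl (.inr j) => .inl (.inr (.inl j))
  | .inr a => .inr (.inl a)

/-- inclusion of the vertices of `Ψ` into the amalgamation -/
def psiInc : Vtx n p gΨ → AVtx m n p gΦ gΨ
  | .inl (.inl j) => .inl (.inr (.inl j))
  | .inl (.inr l) => .inl (.inr (.inr l))
  | .inr a => .inr (.inr a)

/-- The edges of the amalgamation `Φ+Ψ`, tagged (`true` for `Φ`-edges, `false` for
`Ψ`-edges); the edge sets are kept disjoint via the tag. -/
def amEdge (Φ : GGraph m n gΦ sx sy) (Ψ : GGraph n p gΨ sy sz) :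
    Bool → AVtx m n p gΦ gΨ → AVtx m n p gΦ gΨ → Prop
  | true, u, v => ∃ u' v', Φ.edge u' v' ∧ phiInc u' = u ∧ phiInc v' = v
  | false, u, v => ∃ u' v', Ψ.edge u' v' ∧ psiInc u' = u ∧ psiInc v' = v

/-- `Φ+Ψ` has a single (connected) component. -/
def AmalgConnected (Φ : GGraph m n gΦ sx sy) (Ψ : GGraph n p gΨ sy sz) : Prop :=
  ∀ u v : AVtx m n p gΦ gΨ,
    Conn (fun a b => amEdge Φ Ψ true a b ∨ amEdge Φ Ψ false a b) u v

/-- There is an alternating loop in `Φ+Ψ`: a closed alternating chain, i.e. a cyclic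
sequence of vertices joined by edges of `Φ+Ψ` such that of any two adjacent edges one
belongs to `E_Φ` and the other to `E_Ψ`. -/
def HasAltLoop (Φ : GGraph m n gΦ sx sy) (Ψ : GGraph n p gΨ sy sz) : Prop :=
  ∃ (q : ℕ) (vs : ℕ → AVtx m n p gΦ gΨ) (sd : ℕ → Bool),
    0 < q ∧ vs 0 = vs q ∧
    (∀ t, t < q → amEdge Φ Ψ (sd t) (vs t) (vs (t + 1))) ∧
    (∀ t, t + 1 < q → sd t ≠ sd (t + 1))

/-- `Φ+Ψ` provides g-dinaturality: for every category, all functors of the types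
prescribed by the signs of the argument places and all g-dinatural `γ`, `δ` with
graphs `Φ`, `Ψ`, the composite family is g-dinatural with the (single-component)
composite graph `ΨΦ`, i.e. the composite hexagon commutes.  (For a
single-component graph, g-dinaturality depends only on the signs of the argument
places.) -/
def Provides (Φ : GGraph m n gΦ sx sy) (Ψ : GGraph n p gΨ sy sz) : Prop :=
  ∀ {B : Type u} [Category.{v} B]
    (F : (∀ i : Fin m, VarCat B (sx i)) ⥤ B)
    (G : (∀ j : Fin n, VarCat B (sy j)) ⥤ B)
    (H : (∀ l : Fin p, VarCat B (sz l)) ⥤ B)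
    (γ : ∀ A : Fin Φ.k → B, F.obj (diagObj sx Φ.πL A) ⟶ G.obj (diagObj sy Φ.πR A))
    (δ : ∀ A : Fin Ψ.k → B, G.obj (diagObj sy Ψ.πL A) ⟶ H.obj (diagObj sz Ψ.πR A)),
    IsGDin Φ F G γ → IsGDin Ψ G H δ →
    SingleHex sx sz F H (fun A => γ (fun _ => A) ≫ δ (fun _ => A))

end Amalg

/-! ### The free category `𝒟` of the equational class `𝒦_{Φ,Ψ}` -/

/-- Objects of `𝒟`: freely generated over `{A, C}` by an `m`-ary operation `T`,
an `n`-ary operation `S` and a `p`-ary operation `R`. -/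
inductive DObj (m n p : ℕ) : Type
  | A : DObj m n p
  | C : DObj m n p
  | T : (Fin m → DObj m n p) → DObj m n p
  | S : (Fin n → DObj m n p) → DObj m n p
  | R : (Fin p → DObj m n p) → DObj m n p

/-- source of a functor argument according to its variance -/
abbrev dSrc {γ : Type*} (b : Bool) (X Y : γ) : γ := cond b X Y
/-- target of a functor argument according to its variance -/
abbrev dTgt {γ : Type*} (b : Bool) (X Y : γ) : γ := cond b Y X

section DD

variable {m n p gΦ gΨ : ℕ} {sx : Fin m → Bool} {sy : Fin n → Bool} {sz : Fin p → Bool}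

/-- Morphism terms of the category `𝒟`, generated from `f : A → C`, the identities,
the generic g-dinatural transformations `α`, `β` and the operations `T`, `S`, `R`
(contravariant in their negative argument places). -/
inductive DTerm (Φ : GGraph m n gΦ sx sy) (Ψ : GGraph n p gΨ sy sz) :
    DObj m n p → DObj m n p → Type
  | f : DTerm Φ Ψ .A .C
  | id (X : DObj m n p) : DTerm Φ Ψ X X
  /-- composition, written in diagrammatic order -/
  | comp {X Y Z} : DTerm Φ Ψ X Y → DTerm Φ Ψ Y Z → DTerm Φ Ψ X Z
  | alpha (W : Fin Φ.k → DObj m n p) :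
      DTerm Φ Ψ (.T fun i => W (Φ.πL i)) (.S fun j => W (Φ.πR j))
  | beta (W : Fin Ψ.k → DObj m n p) :
      DTerm Φ Ψ (.S fun j => W (Ψ.πL j)) (.R fun l => W (Ψ.πR l))
  | mapT {X Y : Fin m → DObj m n p} :
      (∀ i, DTerm Φ Ψ (dSrc (sx i) (X i) (Y i)) (dTgt (sx i) (X i) (Y i))) →
      DTerm Φ Ψ (.T X) (.T Y)
  | mapS {X Y : Fin n → DObj m n p} :
      (∀ j, DTerm Φ Ψ (dSrc (sy j) (X j) (Y j)) (dTgt (sy j) (X j) (Y j))) →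
      DTerm Φ Ψ (.S X) (.S Y)
  | mapR {X Y : Fin p → DObj m n p} :
      (∀ l, DTerm Φ Ψ (dSrc (sz l) (X l) (Y l)) (dTgt (sz l) (X l) (Y l))) →
      DTerm Φ Ψ (.R X) (.R Y)

variable {Φ : GGraph m n gΦ sx sy} {Ψ : GGraph n p gΨ sy sz}

/-- composition of functor arguments, respecting variance -/
def dComp {X Y Z : DObj m n p} : (b : Bool) →
    DTerm Φ Ψ (dSrc b X Y) (dTgt b X Y) → DTerm Φ Ψ (dSrc b Y Z) (dTgt b Y Z) →
    DTerm Φ Ψ (dSrc b X Z) (dTgt b X Z)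
  | true, g, h => .comp g h
  | false, g, h => .comp h g

/-- identity as a functor argument -/
def dId (X : DObj m n p) : (b : Bool) → DTerm Φ Ψ (dSrc b X X) (dTgt b X X)
  | true => .id X
  | false => .id X

/-- the object tuple with `P` at the positive and `N` at the negative argument
places of component `i`, and the parameter `Z` elsewhere -/
def mixT {q k : ℕ} (pl : Fin q → Fin k) (s : Fin q → Bool) (i : Fin k)
    (Z : Fin k → DObj m n p) (P N : DObj m n p) : Fin q → DObj m n p :=
  fun j => if pl j = i then (cond (s j) P N) else Z (pl j)

section vecs
variable {q k : ℕ} (pl : Fin q → Fin k) (s : Fin q → Bool) (i : Fin k)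
  (Z : Fin k → DObj m n p) {X Y : DObj m n p} (t : DTerm Φ Ψ X Y)

/-- the argument vector `g` of the equation (α) (left-hand side, source functor):
`t` at the positive and `1_Y` at the negative argument places of component `i`,
identities elsewhere -/
def vecA : ∀ j, DTerm Φ Ψ (dSrc (s j) (mixT pl s i Z X Y j) (updF Z i Y (pl j)))
    (dTgt (s j) (mixT pl s i Z X Y j) (updF Z i Y (pl j))) := fun j => by
  unfold mixT updF
  by_cases h : pl j = i
  · simp only [if_pos h]
    cases hs : s j
    · exact .id Y
    · exact t
  · simp only [if_neg h]
    exact dId (Z (pl j)) (s j)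

/-- the argument vector `h` of the equation (α) (left-hand side, target functor) -/
def vecB : ∀ j, DTerm Φ Ψ (dSrc (s j) (updF Z i Y (pl j)) (mixT pl s i Z Y X j))
    (dTgt (s j) (updF Z i Y (pl j)) (mixT pl s i Z Y X j)) := fun j => by
  unfold mixT updF
  by_cases h : pl j = i
  · simp only [if_pos h]
    cases hs : s j
    · exact t
    · exact .id Y
  · simp only [if_neg h]
    exact dId (Z (pl j)) (s j)

/-- the argument vector `g'` of the equation (α) (right-hand side, source functor) -/
def vecC : ∀ j, DTerm Φ Ψ (dSrc (s j) (mixT pl s i Z X Y j) (updF Z i X (pl j)))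
    (dTgt (s j) (mixT pl s i Z X Y j) (updF Z i X (pl j))) := fun j => by
  unfold mixT updF
  by_cases h : pl j = i
  · simp only [if_pos h]
    cases hs : s j
    · exact t
    · exact .id X
  · simp only [if_neg h]
    exact dId (Z (pl j)) (s j)

/-- the argument vector `h'` of the equation (α) (right-hand side, target functor) -/
def vecD : ∀ j, DTerm Φ Ψ (dSrc (s j) (updF Z i X (pl j)) (mixT pl s i Z Y X j))
    (dTgt (s j) (updF Z i X (pl j)) (mixT pl s i Z Y X j)) := fun j => by
  unfold mixT updF
  by_cases h : pl j = i
  · simp only [if_pos h]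
    cases hs : s j
    · exact .id X
    · exact t
  · simp only [if_neg h]
    exact dId (Z (pl j)) (s j)

end vecs

/-- Equality of morphism terms of `𝒟`: the congruence generated by the
`𝒦_{Φ,Ψ}`-equations (categorial, functorial and g-dinatural equations). -/
inductive DEq : ∀ {X Y : DObj m n p}, DTerm Φ Ψ X Y → DTerm Φ Ψ X Y → Prop
  | refl {X Y} (g : DTerm Φ Ψ X Y) : DEq g g
  | symm {X Y} {g h : DTerm Φ Ψ X Y} : DEq g h → DEq h g
  | trans {X Y} {g h t : DTerm Φ Ψ X Y} : DEq g h → DEq h t → DEq g t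
  | comp_congr {X Y Z} {g g' : DTerm Φ Ψ X Y} {h h' : DTerm Φ Ψ Y Z} :
      DEq g g' → DEq h h' → DEq (.comp g h) (.comp g' h')
  | mapT_congr {X Y : Fin m → DObj m n p} {a b : ∀ i, DTerm Φ Ψ (dSrc (sx i) (X i) (Y i)) (dTgt (sx i) (X i) (Y i))} :
      (∀ i, DEq (a i) (b i)) → DEq (.mapT a) (.mapT b)
  | mapS_congr {X Y : Fin n → DObj m n p} {a b : ∀ j, DTerm Φ Ψ (dSrc (sy j) (X j) (Y j)) (dTgt (sy j) (X j) (Y j))} :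
      (∀ j, DEq (a j) (b j)) → DEq (.mapS a) (.mapS b)
  | mapR_congr {X Y : Fin p → DObj m n p} {a b : ∀ l, DTerm Φ Ψ (dSrc (sz l) (X l) (Y l)) (dTgt (sz l) (X l) (Y l))} :
      (∀ l, DEq (a l) (b l)) → DEq (.mapR a) (.mapR b)
  -- categorial equations
  | id_left {X Y} (g : DTerm Φ Ψ X Y) : DEq (.comp (.id X) g) g
  | id_right {X Y} (g : DTerm Φ Ψ X Y) : DEq (.comp g (.id Y)) g
  | assoc {X Y Z W} (g : DTerm Φ Ψ X Y) (h : DTerm Φ Ψ Y Z) (t : DTerm Φ Ψ Z W) :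
      DEq (.comp (.comp g h) t) (.comp g (.comp h t))
  -- functorial equations
  | functT {X Y Z : Fin m → DObj m n p}
      (a : ∀ i, DTerm Φ Ψ (dSrc (sx i) (X i) (Y i)) (dTgt (sx i) (X i) (Y i)))
      (b : ∀ i, DTerm Φ Ψ (dSrc (sx i) (Y i) (Z i)) (dTgt (sx i) (Y i) (Z i))) :
      DEq (.comp (.mapT a) (.mapT b)) (.mapT (fun i => dComp (sx i) (a i) (b i)))
  | functS {X Y Z : Fin n → DObj m n p}
      (a : ∀ j, DTerm Φ Ψ (dSrc (sy j) (X j) (Y j)) (dTgt (sy j) (X j) (Y j)))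
      (b : ∀ j, DTerm Φ Ψ (dSrc (sy j) (Y j) (Z j)) (dTgt (sy j) (Y j) (Z j))) :
      DEq (.comp (.mapS a) (.mapS b)) (.mapS (fun j => dComp (sy j) (a j) (b j)))
  | functR {X Y Z : Fin p → DObj m n p}
      (a : ∀ l, DTerm Φ Ψ (dSrc (sz l) (X l) (Y l)) (dTgt (sz l) (X l) (Y l)))
      (b : ∀ l, DTerm Φ Ψ (dSrc (sz l) (Y l) (Z l)) (dTgt (sz l) (Y l) (Z l))) :
      DEq (.comp (.mapR a) (.mapR b)) (.mapR (fun l => dComp (sz l) (a l) (b l)))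
  | functT_id (X : Fin m → DObj m n p) :
      DEq (.mapT (fun i => dId (X i) (sx i))) (.id (.T X))
  | functS_id (X : Fin n → DObj m n p) :
      DEq (.mapS (fun j => dId (X j) (sy j))) (.id (.S X))
  | functR_id (X : Fin p → DObj m n p) :
      DEq (.mapR (fun l => dId (X l) (sz l))) (.id (.R X))
  -- g-dinatural equations
  | alphaEq (i : Fin Φ.k) (Z : Fin Φ.k → DObj m n p) {X Y : DObj m n p}
      (t : DTerm Φ Ψ X Y) :
      DEq (.comp (.mapT (vecA Φ.πL sx i Z t))
            (.comp (.alpha (updF Z i Y)) (.mapS (vecB Φ.πR sy i Z t))))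
          (.comp (.mapT (vecC Φ.πL sx i Z t))
            (.comp (.alpha (updF Z i X)) (.mapS (vecD Φ.πR sy i Z t))))
  | betaEq (i : Fin Ψ.k) (Z : Fin Ψ.k → DObj m n p) {X Y : DObj m n p}
      (t : DTerm Φ Ψ X Y) :
      DEq (.comp (.mapS (vecA Ψ.πL sy i Z t))
            (.comp (.beta (updF Z i Y)) (.mapR (vecB Ψ.πR sz i Z t))))
          (.comp (.mapS (vecC Ψ.πL sy i Z t))
            (.comp (.beta (updF Z i X)) (.mapR (vecD Ψ.πR sz i Z t))))

end DD

section Nat0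
variable {m n p gΦ gΨ : ℕ} {sx : Fin m → Bool} {sy : Fin n → Bool} {sz : Fin p → Bool}
variable {Φ : GGraph m n gΦ sx sy} {Ψ : GGraph n p gΨ sy sz}

/-- the object `T⟨A,C⟩` -/
def TAC (sx : Fin m → Bool) : DObj m n p := .T fun i => cond (sx i) .A .C
/-- the object `R⟨C,A⟩` -/
def RCA (sz : Fin p → Bool) : DObj m n p := .R fun l => cond (sz l) .C .A

/-- the argument vector of `T⟨f,1_C⟩ : T⟨A,C⟩ → T(C,…,C)` -/
def gvecC : ∀ i, DTerm Φ Ψ (dSrc (sx i) (cond (sx i) DObj.A DObj.C) DObj.C)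
    (dTgt (sx i) (cond (sx i) DObj.A DObj.C) DObj.C) := fun i => by
  cases hs : sx i
  · exact .id .C
  · exact .f

/-- the argument vector of `T⟨1_A,f⟩ : T⟨A,C⟩ → T(A,…,A)` -/
def gvecA : ∀ i, DTerm Φ Ψ (dSrc (sx i) (cond (sx i) DObj.A DObj.C) DObj.A)
    (dTgt (sx i) (cond (sx i) DObj.A DObj.C) DObj.A) := fun i => by
  cases hs : sx i
  · exact .f
  · exact .id .A

/-- the argument vector of `R⟨1_C,f⟩ : R(C,…,C) → R⟨C,A⟩` -/
def rvecC : ∀ l, DTerm Φ Ψ (dSrc (sz l) DObj.C (cond (sz l) DObj.C DObj.A))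
    (dTgt (sz l) DObj.C (cond (sz l) DObj.C DObj.A)) := fun l => by
  cases hs : sz l
  · exact .f
  · exact .id .C

/-- the argument vector of `R⟨f,1_A⟩ : R(A,…,A) → R⟨C,A⟩` -/
def rvecA : ∀ l, DTerm Φ Ψ (dSrc (sz l) DObj.A (cond (sz l) DObj.C DObj.A))
    (dTgt (sz l) DObj.A (cond (sz l) DObj.C DObj.A)) := fun l => by
  cases hs : sz l
  · exact .id .A
  · exact .f

/-- the left-hand side of the equation `(nat)`:
`R⟨1_C,f⟩ ∘ β(C,…,C) ∘ α(C,…,C) ∘ T⟨f,1_C⟩` (written diagrammatically) -/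
def natLHS (Φ : GGraph m n gΦ sx sy) (Ψ : GGraph n p gΨ sy sz) :
    DTerm Φ Ψ (TAC sx) (RCA sz) :=
  .comp (.mapT gvecC)
    (.comp (.alpha fun _ => .C) (.comp (.beta fun _ => .C) (.mapR rvecC)))

/-- the right-hand side of the equation `(nat)`:
`R⟨f,1_A⟩ ∘ β(A,…,A) ∘ α(A,…,A) ∘ T⟨1_A,f⟩` -/
def natRHS (Φ : GGraph m n gΦ sx sy) (Ψ : GGraph n p gΨ sy sz) :
    DTerm Φ Ψ (TAC sx) (RCA sz) :=
  .comp (.mapT gvecA)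
    (.comp (.alpha fun _ => .A) (.comp (.beta fun _ => .A) (.mapR rvecA)))

end Nat0

/-!
The category `𝒟`, with the functors induced by `T`, `S`, `R`, is itself a setting in which `α` and
`β` are g-dinatural. If `Φ + Ψ` provides g-dinaturality, the hexagon of `β ∘ α` at the generating
arrow `f` therefore commutes in `𝒟`, and that hexagon is the equation. Conversely, any functors
`F`, `G`, `H`, transformations `γ`, `δ` and arrow `P ⟶ Q` assign values to the terms of `𝒟`. When
`γ` and `δ` are g-dinatural, provably equal terms have equal values, so the equation becomes the
hexagon of `δ ∘ γ` at that arrow.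

Both directions read the same equation in a category where the endpoints of the two readings agree
only propositionally; the comparison is made in the arrow category.
-/

section Arrows

variable {C : Type*} [Category C] {D : Type*} [Category D]

theorem arrowMk_comp_congr {X Y Z X' Y' Z' : C} {f : X ⟶ Y} {g : Y ⟶ Z} {f' : X' ⟶ Y'}
    {g' : Y' ⟶ Z'} (hf : Arrow.mk f = Arrow.mk f') (hg : Arrow.mk g = Arrow.mk g') :
    Arrow.mk (f ≫ g) = Arrow.mk (f' ≫ g') := by
  cases hf
  cases hg
  rfl

theorem arrowMk_cast {X Y X' Y' : C} (hX : X = X') (hY : Y = Y') (h : (X ⟶ Y) = (X' ⟶ Y'))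
    (f : X ⟶ Y) : Arrow.mk (cast h f) = Arrow.mk f := by
  subst hX hY
  rfl

theorem arrowMk_map_congr (F : C ⥤ D) {X Y X' Y' : C} {f : X ⟶ Y} {f' : X' ⟶ Y'}
    (h : Arrow.mk f = Arrow.mk f') : Arrow.mk (F.map f) = Arrow.mk (F.map f') :=
  congrArg F.mapArrow.obj h

theorem arrowMk_pi_ext {I : Type*} {E : I → Type*} [∀ i, Category (E i)] {X Y X' Y' : ∀ i, E i}
    {f : X ⟶ Y} {f' : X' ⟶ Y'} (h : ∀ i, Arrow.mk (f i) = Arrow.mk (f' i)) :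
    Arrow.mk f = Arrow.mk f' := by
  obtain rfl : X = X' := funext fun i => congrArg Comma.left (h i)
  obtain rfl : Y = Y' := funext fun i => congrArg Comma.right (h i)
  exact congrArg Arrow.mk (funext fun i => (Arrow.mk_inj _ _).1 (h i))

theorem eq_iff_eq_of_arrowMk_eq {X Y X' Y' : C} {f g : X ⟶ Y} {f' g' : X' ⟶ Y'}
    (hf : Arrow.mk f = Arrow.mk f') (hg : Arrow.mk g = Arrow.mk g') : f = g ↔ f' = g' := by
  rw [← Arrow.mk_inj, hf, hg, Arrow.mk_inj]

theorem eq_id_of_arrowMk_eq_id {X Y : C} {f : X ⟶ X} (h : Arrow.mk f = Arrow.mk (𝟙 Y)) :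
    f = 𝟙 X := by
  obtain rfl : X = Y := congrArg Comma.left h
  exact (Arrow.mk_inj _ _).1 h

theorem arrowMk_comp_eqToHom_comp_congr {W X X₁ Y Y₁ Z W' X' Y' Z' : C} {f : W ⟶ X} {g : X₁ ⟶ Y}
    {h : Y₁ ⟶ Z} {f' : W' ⟶ X'} {g' : X' ⟶ Y'} {h' : Y' ⟶ Z'} (hf : Arrow.mk f = Arrow.mk f')
    (hg : Arrow.mk g = Arrow.mk g') (hh : Arrow.mk h = Arrow.mk h') (hX : X = X₁) (hY : Y = Y₁) :
    Arrow.mk (f ≫ eqToHom hX ≫ g ≫ eqToHom hY ≫ h) = Arrow.mk (f' ≫ g' ≫ h') := by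
  subst hX hY
  simpa using arrowMk_comp_congr hf (arrowMk_comp_congr hg hh)

end Arrows

section Variance

/-- The arrow of `B` or `Bᵒᵖ` determined by an arrow of `B`, according to a variance. -/
def varArrow : (b : Bool) → Arrow B → Arrow (VarCat B b)
  | true, a => a
  | false, a => Arrow.mk a.hom.op

theorem arrowMk_pairHom (b : Bool) {P P' N N' : B} (u : P ⟶ P') (w : N' ⟶ N) :
    Arrow.mk (pairHom b u w) = varArrow b (bif b then Arrow.mk u else Arrow.mk w) := by
  cases b <;> rfl

theorem arrowMk_id_pairObj (b : Bool) (A : B) :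
    Arrow.mk (𝟙 (pairObj b A A)) = varArrow b (Arrow.mk (𝟙 A)) := by
  cases b <;> rfl

theorem arrowMk_hexHom (s : ι → Bool) (pl : ι → Fin k) (c : Fin k) (A : Fin k → B)
    {P P' N N' : B} (u : P ⟶ P') (w : N' ⟶ N) (i : ι) :
    Arrow.mk (hexHom s pl c A u w i) = varArrow (s i)
      (if pl i = c then bif s i then Arrow.mk u else Arrow.mk w
        else Arrow.mk (𝟙 (A (pl i)))) := by
  unfold hexHom
  by_cases hi : pl i = c <;>
    simp only [hi, ↓reduceDIte, if_true, if_false, id, eq_mpr_eq_cast] <;>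
    refine (arrowMk_cast (by simp [hexObj, hi]) (by simp [hexObj, hi]) _ _).trans ?_
  · exact arrowMk_pairHom _ _ _
  · exact arrowMk_id_pairObj _ _

theorem updF_comp {γ γ' : Type*} (o : γ → γ') (A : Fin k → γ) (c : Fin k) (X : γ) :
    updF (o ∘ A) c (o X) = o ∘ updF A c X := by
  funext j
  exact (apply_ite o _ _ _).symm

/-- The argument of variance `b` that a morphism of `B` supplies to a functor, for a family `o`
of objects of `B`: the morphism runs from `o X` to `o Y` when `b` is positive and from `o Y` to
`o X` when `b` is negative. -/
def argHom {γ : Type*} (o : γ → B) : (b : Bool) → {X Y : γ} → (o (dSrc b X Y) ⟶ o (dTgt b X Y)) →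
    (pairObj b (o X) (o X) ⟶ pairObj b (o Y) (o Y))
  | true, _, _, g => g
  | false, _, _, g => g.op

theorem arrowMk_argHom {γ : Type*} (o : γ → B) (b : Bool) {X Y : γ}
    (g : o (dSrc b X Y) ⟶ o (dTgt b X Y)) :
    Arrow.mk (argHom o b g) = varArrow b (Arrow.mk g) := by
  cases b <;> rfl

/-- The g-dinaturality hexagon of `α` for the component `c` of `Γ` and the morphism `f`, with the
other parameters fixed by `A`. -/
def HexagonAt {m n gΓ : ℕ} {sL : Fin m → Bool} {sR : Fin n → Bool} (Γ : GGraph m n gΓ sL sR)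
    (T : (∀ i : Fin m, VarCat B (sL i)) ⥤ B) (S : (∀ j : Fin n, VarCat B (sR j)) ⥤ B)
    (α : ∀ A : Fin Γ.k → B, T.obj (diagObj sL Γ.πL A) ⟶ S.obj (diagObj sR Γ.πR A))
    (c : Fin Γ.k) (A : Fin Γ.k → B) {P Q : B} (f : P ⟶ Q) : Prop :=
  T.map (hexHom sL Γ.πL c A f (𝟙 Q)) ≫
      eqToHom (congrArg T.obj (diag_upd sL Γ.πL c A Q).symm) ≫
      α (updF A c Q) ≫
      eqToHom (congrArg S.obj (diag_upd sR Γ.πR c A Q)) ≫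
      S.map (hexHom sR Γ.πR c A (𝟙 Q) f)
    = T.map (hexHom sL Γ.πL c A (𝟙 P) f) ≫
      eqToHom (congrArg T.obj (diag_upd sL Γ.πL c A P).symm) ≫
      α (updF A c P) ≫
      eqToHom (congrArg S.obj (diag_upd sR Γ.πR c A P)) ≫
      S.map (hexHom sR Γ.πR c A f (𝟙 P))

end Variance

section TermVectors

variable {m n p gΦ gΨ : ℕ} {sx : Fin m → Bool} {sy : Fin n → Bool} {sz : Fin p → Bool}
  {Φ : GGraph m n gΦ sx sy} {Ψ : GGraph n p gΨ sy sz} {β : Type*}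
  (g : ∀ {X Y : DObj m n p}, DTerm Φ Ψ X Y → β)

-- Tactics build the argument vectors of `𝒟`, so their entries are casts along equations of
-- endpoints. A function `g` of terms of all types is blind to these casts.

theorem apply_cast {X Y X' Y' : DObj m n p} (hX : X = X') (hY : Y = Y')
    (h : DTerm Φ Ψ X Y = DTerm Φ Ψ X' Y') (t : DTerm Φ Ψ X Y) : g (cast h t) = g t := by
  subst hX hY
  rfl

theorem apply_dId (X : DObj m n p) (b : Bool) : g (dId X b) = g (.id X) := by
  cases b <;> rfl

section

variable {q l : ℕ} (pl : Fin q → Fin l) (s : Fin q → Bool) (c : Fin l)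
  (Z : Fin l → DObj m n p) {X Y : DObj m n p} (t : DTerm Φ Ψ X Y) (j : Fin q)

theorem apply_vecA : g (vecA pl s c Z t j) =
    if pl j = c then bif s j then g t else g (.id Y) else g (.id (Z (pl j))) := by
  unfold vecA
  by_cases hj : pl j = c <;> simp only [hj, ↓reduceDIte, if_true, if_false, id, eq_mpr_eq_cast] <;>
    refine (apply_cast g (by simp [mixT, updF, hj]) (by simp [mixT, updF, hj]) _ _).trans ?_
  · generalize_proofs
    generalize s j = b at *
    cases b <;> rfl
  · exact apply_dId g _ _

theorem apply_vecB : g (vecB pl s c Z t j) =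
    if pl j = c then bif s j then g (.id Y) else g t else g (.id (Z (pl j))) := by
  unfold vecB
  by_cases hj : pl j = c <;> simp only [hj, ↓reduceDIte, if_true, if_false, id, eq_mpr_eq_cast] <;>
    refine (apply_cast g (by simp [mixT, updF, hj]) (by simp [mixT, updF, hj]) _ _).trans ?_
  · generalize_proofs
    generalize s j = b at *
    cases b <;> rfl
  · exact apply_dId g _ _

theorem apply_vecC : g (vecC pl s c Z t j) =
    if pl j = c then bif s j then g (.id X) else g t else g (.id (Z (pl j))) := by
  unfold vecC
  by_cases hj : pl j = c <;> simp only [hj, ↓reduceDIte, if_true, if_false, id, eq_mpr_eq_cast] <;>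
    refine (apply_cast g (by simp [mixT, updF, hj]) (by simp [mixT, updF, hj]) _ _).trans ?_
  · generalize_proofs
    generalize s j = b at *
    cases b <;> rfl
  · exact apply_dId g _ _

theorem apply_vecD : g (vecD pl s c Z t j) =
    if pl j = c then bif s j then g t else g (.id X) else g (.id (Z (pl j))) := by
  unfold vecD
  by_cases hj : pl j = c <;> simp only [hj, ↓reduceDIte, if_true, if_false, id, eq_mpr_eq_cast] <;>
    refine (apply_cast g (by simp [mixT, updF, hj]) (by simp [mixT, updF, hj]) _ _).trans ?_
  · generalize_proofs
    generalize s j = b at *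
    cases b <;> rfl
  · exact apply_dId g _ _

end

theorem apply_gvecC (i : Fin m) :
    g (gvecC (Φ := Φ) (Ψ := Ψ) i) = bif sx i then g .f else g (.id .C) := by
  unfold gvecC
  generalize_proofs
  generalize sx i = b at *
  cases b <;> rfl

theorem apply_gvecA (i : Fin m) :
    g (gvecA (Φ := Φ) (Ψ := Ψ) i) = bif sx i then g (.id .A) else g .f := by
  unfold gvecA
  generalize_proofs
  generalize sx i = b at *
  cases b <;> rfl

theorem apply_rvecC (i : Fin p) :
    g (rvecC (Φ := Φ) (Ψ := Ψ) i) = bif sz i then g (.id .C) else g .f := by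
  unfold rvecC
  generalize_proofs
  generalize sz i = b at *
  cases b <;> rfl

theorem apply_rvecA (i : Fin p) :
    g (rvecA (Φ := Φ) (Ψ := Ψ) i) = bif sz i then g .f else g (.id .A) := by
  unfold rvecA
  generalize_proofs
  generalize sz i = b at *
  cases b <;> rfl

end TermVectors

section Interpretations

variable {m n p gΦ gΨ : ℕ} {sx : Fin m → Bool} {sy : Fin n → Bool} {sz : Fin p → Bool}

/-- A family of terms of the shape required of the arguments of one of the operations `T`, `S`,
`R`, with variances `s`. -/
abbrev TermArgs (Φ : GGraph m n gΦ sx sy) (Ψ : GGraph n p gΨ sy sz) {q : ℕ} (s : Fin q → Bool)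
    (X Y : Fin q → DObj m n p) : Type :=
  ∀ j, DTerm Φ Ψ (dSrc (s j) (X j) (Y j)) (dTgt (s j) (X j) (Y j))

/-- What the operations `T`, `S` and `R` of `𝒟` have in common: an operation on objects and
morphism terms, with variances `s`, that is functorial modulo `DEq`. -/
structure TermOp (Φ : GGraph m n gΦ sx sy) (Ψ : GGraph n p gΨ sy sz) {q : ℕ}
    (s : Fin q → Bool) where
  obj : (Fin q → DObj m n p) → DObj m n p
  map {X Y : Fin q → DObj m n p} : TermArgs Φ Ψ s X Y → DTerm Φ Ψ (obj X) (obj Y)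
  map_congr {X Y : Fin q → DObj m n p} {a b : TermArgs Φ Ψ s X Y} :
    (∀ j, DEq (a j) (b j)) → DEq (map a) (map b)
  map_comp {X Y Z : Fin q → DObj m n p} (a : TermArgs Φ Ψ s X Y) (b : TermArgs Φ Ψ s Y Z) :
    DEq (.comp (map a) (map b)) (map fun j => dComp (s j) (a j) (b j))
  map_id (X : Fin q → DObj m n p) : DEq (map fun j => dId (X j) (s j)) (.id (obj X))

variable (Φ : GGraph m n gΦ sx sy) (Ψ : GGraph n p gΨ sy sz)

/-- The operation `T` of `𝒟`. -/
abbrev opT : TermOp Φ Ψ sx := ⟨.T, .mapT, .mapT_congr, .functT, .functT_id⟩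

/-- The operation `S` of `𝒟`. -/
abbrev opS : TermOp Φ Ψ sy := ⟨.S, .mapS, .mapS_congr, .functS, .functS_id⟩

/-- The operation `R` of `𝒟`. -/
abbrev opR : TermOp Φ Ψ sz := ⟨.R, .mapR, .mapR_congr, .functR, .functR_id⟩

/-- An interpretation of the objects and morphism terms of `𝒟` in a category, compatible with
identities and composition. -/
structure Interpretation (B : Type u) [Category.{v} B] where
  obj : DObj m n p → B
  hom {X Y : DObj m n p} : DTerm Φ Ψ X Y → (obj X ⟶ obj Y)
  hom_id (X : DObj m n p) : hom (.id X) = 𝟙 (obj X)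
  hom_comp {X Y Z : DObj m n p} (a : DTerm Φ Ψ X Y) (b : DTerm Φ Ψ Y Z) :
    hom (.comp a b) = hom a ≫ hom b

variable {Φ Ψ}

namespace Interpretation

variable (I : Interpretation Φ Ψ B) {q r : ℕ} {s : Fin q → Bool} {s' : Fin r → Bool}

/-- The value of a morphism term, as an object of the arrow category: this allows the values of
terms with different endpoints to be compared. -/
abbrev arrow {X Y : DObj m n p} (t : DTerm Φ Ψ X Y) : Arrow B := Arrow.mk (I.hom t)

theorem arrow_inj {X Y : DObj m n p} {a b : DTerm Φ Ψ X Y} :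
    I.arrow a = I.arrow b ↔ I.hom a = I.hom b :=
  Arrow.mk_inj _ _

theorem arrow_id (X : DObj m n p) : I.arrow (.id X) = Arrow.mk (𝟙 (I.obj X)) :=
  congrArg Arrow.mk (I.hom_id X)

/-- The tuple of morphisms that a family of argument terms supplies to a functor. -/
def args {X Y : Fin q → DObj m n p} (a : TermArgs Φ Ψ s X Y) :
    (fun j => pairObj (s j) (I.obj (X j)) (I.obj (X j))) ⟶
      fun j => pairObj (s j) (I.obj (Y j)) (I.obj (Y j)) :=
  fun j => argHom I.obj (s j) (I.hom (a j))

/-- The functor `F` interprets the operation `O`. As objects built from `O` need only be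
propositionally equal to values of `F`, morphisms are compared in the arrow category. -/
def RealizesOp (O : TermOp Φ Ψ s) (F : (∀ j, VarCat B (s j)) ⥤ B) : Prop :=
  ∀ ⦃X Y : Fin q → DObj m n p⦄ (a : TermArgs Φ Ψ s X Y),
    Arrow.mk (F.map (I.args a)) = I.arrow (O.map a)

/-- The family `γ` interprets the family `θ` of terms between values of the operations `O` and
`O'`. -/
def RealizesTrans (O : TermOp Φ Ψ s) (O' : TermOp Φ Ψ s') {l : ℕ} {pl : Fin q → Fin l}
    {pl' : Fin r → Fin l} {F : (∀ j, VarCat B (s j)) ⥤ B} {G : (∀ j, VarCat B (s' j)) ⥤ B}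
    (θ : ∀ W : Fin l → DObj m n p, DTerm Φ Ψ (O.obj fun j => W (pl j)) (O'.obj fun j => W (pl' j)))
    (γ : ∀ A : Fin l → B, F.obj (diagObj s pl A) ⟶ G.obj (diagObj s' pl' A)) : Prop :=
  ∀ W, Arrow.mk (γ (I.obj ∘ W)) = I.arrow (θ W)

variable {I} {O : TermOp Φ Ψ s} {F : (∀ j, VarCat B (s j)) ⥤ B}

theorem args_dComp {X Y Z : Fin q → DObj m n p} (a : TermArgs Φ Ψ s X Y)
    (b : TermArgs Φ Ψ s Y Z) :
    I.args (fun j => dComp (s j) (a j) (b j)) = I.args a ≫ I.args b := by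
  funext j
  change argHom I.obj (s j) (I.hom (dComp (s j) (a j) (b j))) =
    argHom I.obj (s j) (I.hom (a j)) ≫ argHom I.obj (s j) (I.hom (b j))
  generalize a j = t, b j = t'
  generalize s j = e at *
  cases e
  · exact congrArg Quiver.Hom.op (I.hom_comp t' t)
  · exact I.hom_comp t t'

theorem args_dId (X : Fin q → DObj m n p) :
    I.args (fun j => dId (X j) (s j)) = 𝟙 _ := by
  funext j
  change argHom I.obj (s j) (I.hom (dId (X j) (s j))) = 𝟙 (pairObj _ _ _)
  generalize s j = e at *
  cases e
  · exact congrArg Quiver.Hom.op (I.hom_id _)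
  · exact I.hom_id _

theorem RealizesOp.hom_map_congr (hF : I.RealizesOp O F) {X Y : Fin q → DObj m n p}
    {a b : TermArgs Φ Ψ s X Y} (h : ∀ j, I.hom (a j) = I.hom (b j)) :
    I.hom (O.map a) = I.hom (O.map b) := by
  have hargs : I.args a = I.args b := funext fun j => congrArg (argHom I.obj (s j)) (h j)
  rw [← I.arrow_inj, ← hF, ← hF, hargs]

theorem RealizesOp.hom_map_dComp (hF : I.RealizesOp O F) {X Y Z : Fin q → DObj m n p}
    (a : TermArgs Φ Ψ s X Y) (b : TermArgs Φ Ψ s Y Z) :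
    I.hom (.comp (O.map a) (O.map b)) = I.hom (O.map fun j => dComp (s j) (a j) (b j)) := by
  rw [← I.arrow_inj, ← hF, args_dComp, F.map_comp, arrow, I.hom_comp]
  exact (arrowMk_comp_congr (hF a) (hF b)).symm

theorem RealizesOp.hom_map_dId (hF : I.RealizesOp O F) (X : Fin q → DObj m n p) :
    I.hom (O.map fun j => dId (X j) (s j)) = I.hom (.id (O.obj X)) := by
  have h : I.arrow (O.map fun j => dId (X j) (s j)) =
      Arrow.mk (𝟙 (F.obj fun j => pairObj (s j) (I.obj (X j)) (I.obj (X j)))) := by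
    rw [← hF, args_dId, F.map_id]
  rw [I.hom_id, eq_id_of_arrowMk_eq_id h]

theorem RealizesOp.arrowMk_map_eq (hF : I.RealizesOp O F) {V V' : ∀ j, VarCat B (s j)}
    {f : V ⟶ V'} {X Y : Fin q → DObj m n p} {a : TermArgs Φ Ψ s X Y}
    (h : ∀ j, Arrow.mk (f j) = varArrow (s j) (I.arrow (a j))) :
    Arrow.mk (F.map f) = I.arrow (O.map a) := by
  rw [← hF]
  exact arrowMk_map_congr F (arrowMk_pi_ext fun j => (h j).trans (arrowMk_argHom _ _ _).symm)

theorem RealizesOp.arrowMk_map_hexHom (hF : I.RealizesOp O F) {l : ℕ} {pl : Fin q → Fin l}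
    {c : Fin l} {Z : Fin l → DObj m n p} {P P' N N' : DObj m n p} {u : DTerm Φ Ψ P P'}
    {w : DTerm Φ Ψ N' N} {X Y : Fin q → DObj m n p} {a : TermArgs Φ Ψ s X Y}
    (h : ∀ j, I.arrow (a j) = if pl j = c then bif s j then I.arrow u else I.arrow w
      else I.arrow (.id (Z (pl j)))) :
    Arrow.mk (F.map (hexHom s pl c (I.obj ∘ Z) (I.hom u) (I.hom w))) = I.arrow (O.map a) :=
  hF.arrowMk_map_eq fun j => by
    rw [arrowMk_hexHom, h, arrow_id, Function.comp_apply]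

theorem RealizesOp.arrowMk_map_tupHom (hF : I.RealizesOp O F) {P P' N N' : DObj m n p}
    {u : DTerm Φ Ψ P P'} {w : DTerm Φ Ψ N' N} {X Y : Fin q → DObj m n p}
    {a : TermArgs Φ Ψ s X Y} (h : ∀ j, I.arrow (a j) = bif s j then I.arrow u else I.arrow w) :
    Arrow.mk (F.map (tupHom s (I.hom u) (I.hom w))) = I.arrow (O.map a) :=
  hF.arrowMk_map_eq fun j => (arrowMk_pairHom _ _ _).trans (congrArg _ (h j).symm)

theorem hexagonAt_iff_hom_eq {g : ℕ} {Γ : GGraph q r g s s'} {O' : TermOp Φ Ψ s'}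
    {G : (∀ j, VarCat B (s' j)) ⥤ B}
    {θ : ∀ W : Fin Γ.k → DObj m n p,
      DTerm Φ Ψ (O.obj fun j => W (Γ.πL j)) (O'.obj fun j => W (Γ.πR j))}
    {γ : ∀ A : Fin Γ.k → B, F.obj (diagObj s Γ.πL A) ⟶ G.obj (diagObj s' Γ.πR A)}
    (hF : I.RealizesOp O F) (hG : I.RealizesOp O' G) (hγ : I.RealizesTrans O O' θ γ)
    (c : Fin Γ.k) (Z : Fin Γ.k → DObj m n p) {X Y : DObj m n p} (t : DTerm Φ Ψ X Y) :
    HexagonAt Γ F G γ c (I.obj ∘ Z) (I.hom t) ↔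
      I.hom (.comp (O.map (vecA Γ.πL s c Z t))
          (.comp (θ (updF Z c Y)) (O'.map (vecB Γ.πR s' c Z t)))) =
        I.hom (.comp (O.map (vecC Γ.πL s c Z t))
          (.comp (θ (updF Z c X)) (O'.map (vecD Γ.πR s' c Z t)))) := by
  have hγ_updF (W : DObj m n p) :
      Arrow.mk (γ (updF (I.obj ∘ Z) c (I.obj W))) = I.arrow (θ (updF Z c W)) := by
    rw [updF_comp]
    exact hγ _
  simp only [HexagonAt, ← I.hom_id, I.hom_comp]
  exact eq_iff_eq_of_arrowMk_eq
    (arrowMk_comp_eqToHom_comp_congr (hF.arrowMk_map_hexHom (apply_vecA I.arrow _ s c Z t))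
      (hγ_updF Y) (hG.arrowMk_map_hexHom (apply_vecB I.arrow _ s' c Z t)) _ _)
    (arrowMk_comp_eqToHom_comp_congr (hF.arrowMk_map_hexHom (apply_vecC I.arrow _ s c Z t))
      (hγ_updF X) (hG.arrowMk_map_hexHom (apply_vecD I.arrow _ s' c Z t)) _ _)

end Interpretation

/-- An interpretation of `𝒟` in `B` together with functors and transformations that interpret
`T`, `S`, `R`, `α` and `β`; the transformations need not be g-dinatural. -/
structure Model (Φ : GGraph m n gΦ sx sy) (Ψ : GGraph n p gΨ sy sz) (B : Type u)
    [Category.{v} B] extends Interpretation Φ Ψ B where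
  F : (∀ i, VarCat B (sx i)) ⥤ B
  G : (∀ j, VarCat B (sy j)) ⥤ B
  H : (∀ l, VarCat B (sz l)) ⥤ B
  γ : ∀ A : Fin Φ.k → B, F.obj (diagObj sx Φ.πL A) ⟶ G.obj (diagObj sy Φ.πR A)
  δ : ∀ A : Fin Ψ.k → B, G.obj (diagObj sy Ψ.πL A) ⟶ H.obj (diagObj sz Ψ.πR A)
  realizes_T : toInterpretation.RealizesOp (opT Φ Ψ) F
  realizes_S : toInterpretation.RealizesOp (opS Φ Ψ) G
  realizes_R : toInterpretation.RealizesOp (opR Φ Ψ) H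
  realizes_alpha : toInterpretation.RealizesTrans (opT Φ Ψ) (opS Φ Ψ) .alpha γ
  realizes_beta : toInterpretation.RealizesTrans (opS Φ Ψ) (opR Φ Ψ) .beta δ

namespace Model

variable (M : Model Φ Ψ B)

theorem hom_eq_of_dEq (hγ : IsGDin Φ M.F M.G M.γ) (hδ : IsGDin Ψ M.G M.H M.δ) {X Y : DObj m n p}
    {a b : DTerm Φ Ψ X Y} (h : DEq a b) : M.hom a = M.hom b := by
  induction h with
  | refl => rfl
  | symm _ ih => exact ih.symm
  | trans _ _ ih₁ ih₂ => exact ih₁.trans ih₂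
  | comp_congr _ _ ih₁ ih₂ => rw [M.hom_comp, M.hom_comp, ih₁, ih₂]
  | mapT_congr _ ih => exact M.realizes_T.hom_map_congr ih
  | mapS_congr _ ih => exact M.realizes_S.hom_map_congr ih
  | mapR_congr _ ih => exact M.realizes_R.hom_map_congr ih
  | id_left => rw [M.hom_comp, M.hom_id, Category.id_comp]
  | id_right => rw [M.hom_comp, M.hom_id, Category.comp_id]
  | assoc => simp only [M.hom_comp, Category.assoc]
  | functT a b => exact M.realizes_T.hom_map_dComp a b
  | functS a b => exact M.realizes_S.hom_map_dComp a b
  | functR a b => exact M.realizes_R.hom_map_dComp a b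
  | functT_id X => exact M.realizes_T.hom_map_dId X
  | functS_id X => exact M.realizes_S.hom_map_dId X
  | functR_id X => exact M.realizes_R.hom_map_dId X
  | alphaEq i Z t =>
    exact (Interpretation.hexagonAt_iff_hom_eq M.realizes_T M.realizes_S M.realizes_alpha i Z t).1
      (hγ _ _ _ _ _)
  | betaEq i Z t =>
    exact (Interpretation.hexagonAt_iff_hom_eq M.realizes_S M.realizes_R M.realizes_beta i Z t).1
      (hδ _ _ _ _ _)

theorem hexagon_iff_hom_natLHS_eq :
    M.F.map (tupHom sx (M.hom .f) (𝟙 _)) ≫ (M.γ (fun _ => M.obj .C) ≫ M.δ (fun _ => M.obj .C)) ≫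
        M.H.map (tupHom sz (𝟙 _) (M.hom .f)) =
      M.F.map (tupHom sx (𝟙 _) (M.hom .f)) ≫ (M.γ (fun _ => M.obj .A) ≫ M.δ (fun _ => M.obj .A)) ≫
        M.H.map (tupHom sz (M.hom .f) (𝟙 _)) ↔
      M.hom (natLHS Φ Ψ) = M.hom (natRHS Φ Ψ) := by
  simp only [natLHS, natRHS, TAC, RCA, ← M.hom_id, M.hom_comp, Category.assoc]
  exact eq_iff_eq_of_arrowMk_eq
    (arrowMk_comp_congr (M.realizes_T.arrowMk_map_tupHom (apply_gvecC M.arrow))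
      (arrowMk_comp_congr (M.realizes_alpha fun _ => .C)
        (arrowMk_comp_congr (M.realizes_beta fun _ => .C)
          (M.realizes_R.arrowMk_map_tupHom (apply_rvecC M.arrow)))))
    (arrowMk_comp_congr (M.realizes_T.arrowMk_map_tupHom (apply_gvecA M.arrow))
      (arrowMk_comp_congr (M.realizes_alpha fun _ => .A)
        (arrowMk_comp_congr (M.realizes_beta fun _ => .A)
          (M.realizes_R.arrowMk_map_tupHom (apply_rvecA M.arrow)))))

end Model

end Interpretations

section Evaluation

variable {m n p gΦ gΨ : ℕ} {sx : Fin m → Bool} {sy : Fin n → Bool} {sz : Fin p → Bool}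
  {Φ : GGraph m n gΦ sx sy} {Ψ : GGraph n p gΨ sy sz}
  (F : (∀ i, VarCat B (sx i)) ⥤ B) (G : (∀ j, VarCat B (sy j)) ⥤ B)
  (H : (∀ l, VarCat B (sz l)) ⥤ B) {P Q : B}

/-- The value of an object of `𝒟` when `A`, `C`, `T`, `S`, `R` are given the values `P`, `Q`,
`F`, `G`, `H`. -/
def evalObj (P Q : B) : DObj m n p → B
  | .A => P
  | .C => Q
  | .T X => F.obj fun i => pairObj (sx i) (evalObj P Q (X i)) (evalObj P Q (X i))
  | .S X => G.obj fun j => pairObj (sy j) (evalObj P Q (X j)) (evalObj P Q (X j))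
  | .R X => H.obj fun l => pairObj (sz l) (evalObj P Q (X l)) (evalObj P Q (X l))

variable (γ : ∀ A : Fin Φ.k → B, F.obj (diagObj sx Φ.πL A) ⟶ G.obj (diagObj sy Φ.πR A))
  (δ : ∀ A : Fin Ψ.k → B, G.obj (diagObj sy Ψ.πL A) ⟶ H.obj (diagObj sz Ψ.πR A))
  (f : P ⟶ Q)

/-- The value of a morphism term of `𝒟` when `f`, `α`, `β`, `T`, `S`, `R` are given the values
`f`, `γ`, `δ`, `F`, `G`, `H`. -/
def evalHom {X Y : DObj m n p} : DTerm Φ Ψ X Y → (evalObj F G H P Q X ⟶ evalObj F G H P Q Y)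
  | .f => f
  | .id X => 𝟙 (evalObj F G H P Q X)
  | .comp a b => evalHom a ≫ evalHom b
  | .alpha W => γ (evalObj F G H P Q ∘ W)
  | .beta W => δ (evalObj F G H P Q ∘ W)
  | .mapT a => F.map fun i => argHom (evalObj F G H P Q) (sx i) (evalHom (a i))
  | .mapS a => G.map fun j => argHom (evalObj F G H P Q) (sy j) (evalHom (a j))
  | .mapR a => H.map fun l => argHom (evalObj F G H P Q) (sz l) (evalHom (a l))

/-- The model of `𝒟` determined by a morphism, three functors and two transformations. -/
def evalModel : Model Φ Ψ B where
  obj := evalObj F G H P Q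
  hom := evalHom F G H γ δ f
  hom_id _ := rfl
  hom_comp _ _ := rfl
  F := F
  G := G
  H := H
  γ := γ
  δ := δ
  realizes_T _ _ _ := rfl
  realizes_S _ _ _ := rfl
  realizes_R _ _ _ := rfl
  realizes_alpha _ := rfl
  realizes_beta _ := rfl

end Evaluation

section FreeCategory

variable {m n p gΦ gΨ : ℕ} {sx : Fin m → Bool} {sy : Fin n → Bool} {sz : Fin p → Bool}

/-- The setoid on the terms between two objects of `𝒟` given by `DEq`. -/
def termSetoid (Φ : GGraph m n gΦ sx sy) (Ψ : GGraph n p gΨ sy sz) (X Y : DObj m n p) :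
    Setoid (DTerm Φ Ψ X Y) :=
  ⟨DEq, .refl, .symm, .trans⟩

/-- The category `𝒟`: its objects are those of `DObj`, its morphisms are terms modulo `DEq`, both
lifted to arbitrary universes. -/
structure FreeCat (Φ : GGraph m n gΦ sx sy) (Ψ : GGraph n p gΨ sy sz) : Type u where
  obj : DObj m n p

variable {Φ : GGraph m n gΦ sx sy} {Ψ : GGraph n p gΨ sy sz}

instance : Category.{v} (FreeCat.{u} Φ Ψ) where
  Hom X Y := ULift.{v} (Quotient (termSetoid Φ Ψ X.obj Y.obj))
  id X := ⟨Quotient.mk _ (.id X.obj)⟩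
  comp g h := ⟨Quotient.map₂ .comp (fun _ _ hg _ _ hh => .comp_congr hg hh) g.down h.down⟩
  id_comp := by
    rintro _ _ ⟨⟨a⟩⟩
    exact congrArg ULift.up (Quotient.sound (.id_left a))
  comp_id := by
    rintro _ _ ⟨⟨a⟩⟩
    exact congrArg ULift.up (Quotient.sound (.id_right a))
  assoc := by
    rintro _ _ _ _ ⟨⟨a⟩⟩ ⟨⟨b⟩⟩ ⟨⟨c⟩⟩
    exact congrArg ULift.up (Quotient.sound (.assoc a b c))

namespace FreeCat

variable (Φ Ψ) in
/-- The interpretation of objects and terms of `𝒟` by themselves. -/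
def interp : Interpretation Φ Ψ (FreeCat.{u} Φ Ψ) where
  obj X := ⟨X⟩
  hom a := (⟨Quotient.mk _ a⟩ : ULift.{v} _)
  hom_id _ := rfl
  hom_comp _ _ := rfl

theorem interp_hom_eq_iff {X Y : DObj m n p} {a b : DTerm Φ Ψ X Y} :
    (interp.{u, v} Φ Ψ).hom a = (interp Φ Ψ).hom b ↔ DEq a b :=
  ULift.up_injective.eq_iff.trans Quotient.eq

theorem interp_hom_surjective {X Y : FreeCat.{u} Φ Ψ} (g : X ⟶ Y) :
    ∃ a : DTerm Φ Ψ X.obj Y.obj, (interp.{u, v} Φ Ψ).hom a = g :=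
  ⟨g.down.out, congrArg ULift.up (Quotient.out_eq _)⟩

/-- The object of `𝒟` underlying an object of `𝒟` or `𝒟ᵒᵖ`. -/
def base : (b : Bool) → VarCat (FreeCat.{u} Φ Ψ) b → DObj m n p
  | true, V => FreeCat.obj V
  | false, V => FreeCat.obj (Opposite.unop V)

theorem base_pairObj (b : Bool) (X : FreeCat.{u} Φ Ψ) : base b (pairObj b X X) = X.obj := by
  cases b <;> rfl

/-- A term representing a morphism of `𝒟` or `𝒟ᵒᵖ`. -/
noncomputable def rep : (b : Bool) → {V W : VarCat (FreeCat.{u} Φ Ψ) b} → (V ⟶ W) →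
    DTerm Φ Ψ (dSrc b (base b V) (base b W)) (dTgt b (base b V) (base b W))
  | true, _, _, g => (interp_hom_surjective g).choose
  | false, _, _, g => (interp_hom_surjective (Quiver.Hom.unop g)).choose

theorem rep_true {X Y : FreeCat.{u} Φ Ψ} (g : X ⟶ Y) :
    (interp.{u, v} Φ Ψ).hom (rep.{u, v} true g) = g :=
  (interp_hom_surjective g).choose_spec

theorem rep_false {X Y : FreeCat.{u} Φ Ψ} (g : X ⟶ Y) :
    (interp.{u, v} Φ Ψ).hom (rep.{u, v} false g.op) = g :=
  (interp_hom_surjective g).choose_spec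

theorem rep_id (b : Bool) (V : VarCat (FreeCat.{u} Φ Ψ) b) :
    DEq (rep.{u, v} b (𝟙 V)) (dId (base b V) b) := by
  cases b
  · exact interp_hom_eq_iff.1 (rep_false _)
  · exact interp_hom_eq_iff.1 (rep_true _)

theorem rep_comp (b : Bool) {V W U : VarCat (FreeCat.{u} Φ Ψ) b} (g : V ⟶ W) (h : W ⟶ U) :
    DEq (rep.{u, v} b (g ≫ h)) (dComp b (rep b g) (rep b h)) := by
  apply interp_hom_eq_iff.{u, v}.1
  cases b
  · refine (rep_false _).trans ?_
    exact congrArg₂ (· ≫ ·) (rep_false h.unop).symm (rep_false g.unop).symm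
  · refine (rep_true _).trans ?_
    exact congrArg₂ (· ≫ ·) (rep_true g).symm (rep_true h).symm

theorem arrow_rep_argHom (b : Bool) {X Y : DObj m n p}
    (a : DTerm Φ Ψ (dSrc b X Y) (dTgt b X Y)) :
    (interp.{u, v} Φ Ψ).arrow (rep.{u, v} b (argHom (interp Φ Ψ).obj b ((interp Φ Ψ).hom a))) =
      (interp Φ Ψ).arrow a := by
  cases b
  · exact congrArg Arrow.mk (rep_false _)
  · exact congrArg Arrow.mk (rep_true _)

variable {q r : ℕ} {s : Fin q → Bool} {s' : Fin r → Bool}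

/-- The functor on `𝒟` that an operation on terms induces. -/
noncomputable def functor (O : TermOp Φ Ψ s) :
    (∀ j, VarCat (FreeCat.{u} Φ Ψ) (s j)) ⥤ FreeCat.{u} Φ Ψ where
  obj V := ⟨O.obj fun j => base (s j) (V j)⟩
  map g := (interp.{u, v} Φ Ψ).hom (O.map fun j => rep (s j) (g j))
  map_id V := interp_hom_eq_iff.2
    ((O.map_congr fun j => rep_id (s j) (V j)).trans (O.map_id _))
  map_comp g h := interp_hom_eq_iff.2
    ((O.map_congr fun j => rep_comp (s j) (g j) (h j)).trans (O.map_comp _ _).symm)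

theorem arrow_map_congr (O : TermOp Φ Ψ s) {X Y X' Y' : Fin q → DObj m n p} (hX : X = X')
    (hY : Y = Y') {a : TermArgs Φ Ψ s X Y} {a' : TermArgs Φ Ψ s X' Y'}
    (h : ∀ j, (interp.{u, v} Φ Ψ).arrow (a j) = (interp Φ Ψ).arrow (a' j)) :
    (interp.{u, v} Φ Ψ).arrow (O.map a) = (interp Φ Ψ).arrow (O.map a') := by
  subst hX hY
  simp only [Interpretation.arrow_inj, interp_hom_eq_iff] at h ⊢
  exact O.map_congr h

theorem realizesOp_functor (O : TermOp Φ Ψ s) :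
    (interp.{u, v} Φ Ψ).RealizesOp O (functor O) := fun _ _ a =>
  arrow_map_congr O (funext fun j => base_pairObj (s j) _) (funext fun j => base_pairObj (s j) _)
    fun j => arrow_rep_argHom (s j) (a j)

theorem functor_obj_diagObj (O : TermOp Φ Ψ s) {l : ℕ} (pl : Fin q → Fin l)
    (A : Fin l → FreeCat.{u} Φ Ψ) :
    (functor.{u, v} O).obj (diagObj s pl A) = ⟨O.obj fun j => (A (pl j)).obj⟩ :=
  congrArg (fun X => FreeCat.mk (O.obj X)) (funext fun j => base_pairObj (s j) (A (pl j)))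

section Transformations

variable {O : TermOp Φ Ψ s} {O' : TermOp Φ Ψ s'}

/-- The transformation between functors on `𝒟` that a family of terms induces. -/
noncomputable def trans {l : ℕ} {pl : Fin q → Fin l} {pl' : Fin r → Fin l}
    (θ : ∀ W : Fin l → DObj m n p, DTerm Φ Ψ (O.obj fun j => W (pl j)) (O'.obj fun j => W (pl' j)))
    (A : Fin l → FreeCat.{u} Φ Ψ) :
    (functor.{u, v} O).obj (diagObj s pl A) ⟶ (functor.{u, v} O').obj (diagObj s' pl' A) :=
  eqToHom (functor_obj_diagObj.{u, v} O pl A) ≫ (interp Φ Ψ).hom (θ fun c => (A c).obj) ≫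
    eqToHom (functor_obj_diagObj.{u, v} O' pl' A).symm

theorem realizesTrans_trans {l : ℕ} {pl : Fin q → Fin l} {pl' : Fin r → Fin l}
    (θ : ∀ W : Fin l → DObj m n p,
      DTerm Φ Ψ (O.obj fun j => W (pl j)) (O'.obj fun j => W (pl' j))) :
    (interp.{u, v} Φ Ψ).RealizesTrans O O' θ (trans θ) := fun _ =>
  (Arrow.arrow_mk_eqToHom_comp _ _).trans (Arrow.arrow_mk_comp_eqToHom _ _)

theorem isGDin_trans {g : ℕ} {Γ : GGraph q r g s s'}
    {θ : ∀ W : Fin Γ.k → DObj m n p,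
      DTerm Φ Ψ (O.obj fun j => W (Γ.πL j)) (O'.obj fun j => W (Γ.πR j))}
    (hθ : ∀ (c : Fin Γ.k) (Z : Fin Γ.k → DObj m n p) {X Y : DObj m n p} (t : DTerm Φ Ψ X Y),
      DEq (.comp (O.map (vecA Γ.πL s c Z t))
          (.comp (θ (updF Z c Y)) (O'.map (vecB Γ.πR s' c Z t))))
        (.comp (O.map (vecC Γ.πL s c Z t))
          (.comp (θ (updF Z c X)) (O'.map (vecD Γ.πR s' c Z t))))) :
    IsGDin Γ (functor.{u, v} O) (functor O') (trans θ) := by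
  intro c A P Q g
  obtain ⟨t, rfl⟩ := interp_hom_surjective g
  exact (Interpretation.hexagonAt_iff_hom_eq (realizesOp_functor O) (realizesOp_functor O')
    (realizesTrans_trans θ) c (fun c => (A c).obj) t).2 (interp_hom_eq_iff.2 (hθ c _ t))

end Transformations

variable (Φ Ψ) in
/-- `𝒟` as a model of itself. -/
noncomputable def model : Model Φ Ψ (FreeCat.{u} Φ Ψ) where
  toInterpretation := interp.{u, v} Φ Ψ
  F := functor (opT Φ Ψ)
  G := functor (opS Φ Ψ)
  H := functor (opR Φ Ψ)
  γ := trans (O := opT Φ Ψ) (O' := opS Φ Ψ) .alpha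
  δ := trans (O := opS Φ Ψ) (O' := opR Φ Ψ) .beta
  realizes_T := realizesOp_functor _
  realizes_S := realizesOp_functor _
  realizes_R := realizesOp_functor _
  realizes_alpha := realizesTrans_trans _
  realizes_beta := realizesTrans_trans _

theorem isGDin_model_γ : IsGDin Φ (model.{u, v} Φ Ψ).F (model Φ Ψ).G (model Φ Ψ).γ :=
  isGDin_trans .alphaEq

theorem isGDin_model_δ : IsGDin Ψ (model.{u, v} Φ Ψ).G (model Φ Ψ).H (model Φ Ψ).δ :=
  isGDin_trans .betaEq

end FreeCat

end FreeCategory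

theorem provides_iff_nat_eq_in_D_general
    {m n p gΦ gΨ : ℕ} {sx : Fin m → Bool} {sy : Fin n → Bool} {sz : Fin p → Bool}
    (Φ : GGraph m n gΦ sx sy) (Ψ : GGraph n p gΨ sy sz) :
    Provides.{u, v} Φ Ψ ↔ DEq (natLHS Φ Ψ) (natRHS Φ Ψ) := by
  constructor
  · intro h
    have hnat := h _ _ _ _ _ FreeCat.isGDin_model_γ.{u, v} FreeCat.isGDin_model_δ
    exact FreeCat.interp_hom_eq_iff.{u, v}.1
      ((FreeCat.model Φ Ψ).hexagon_iff_hom_natLHS_eq.1 (hnat _ _ _))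
  · intro h B _ F G H γ δ hγ hδ P Q f
    exact (evalModel F G H γ δ f).hexagon_iff_hom_natLHS_eq.2
      ((evalModel F G H γ δ f).hom_eq_of_dEq hγ hδ h)

/-- Lemma 2.1 of the paper.  Let `Φ` and `Ψ` be graphs satisfying
the compatibility conditions for amalgamation (shared `y` argument places with the
same signs, disjoint `G`-sets), with the amalgamation `Φ+Ψ` having a single
component, and let `𝒟` be the free category of the equational class `𝒦_{Φ,Ψ}`
generated by the arrow `f : A → C` (here constructed syntactically as `DTerm`
modulo `DEq`).  Then `Φ+Ψ` provides g-dinaturality iff the equation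
`R⟨1_C,f⟩ ∘ β(C,…,C) ∘ α(C,…,C) ∘ T⟨f,1_C⟩ = R⟨f,1_A⟩ ∘ β(A,…,A) ∘ α(A,…,A) ∘ T⟨1_A,f⟩`
holds in `𝒟`. -/
theorem provides_iff_nat_eq_in_D
    {m n p gΦ gΨ : ℕ} {sx : Fin m → Bool} {sy : Fin n → Bool} {sz : Fin p → Bool}
    (Φ : GGraph m n gΦ sx sy) (Ψ : GGraph n p gΨ sy sz)
    (hconn : AmalgConnected Φ Ψ) :
    Provides.{u, v} Φ Ψ ↔ DEq (natLHS Φ Ψ) (natRHS Φ Ψ) :=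
  provides_iff_nat_eq_in_D_general Φ Ψ

end GDin
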